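/- arXiv:2012.08934 — 2 statements merged into one kernel-verified Lean document; each statement's English description precedes it below -/
import Mathlib

section
/- The density of primes in the interval [1,n] satisfies π(n)/n = (1/ln n)(1 + o(1)); equivalently, π(n)·(ln n)/n tends to 1 as n → ∞. -/
open Filter

/-- The prime counting function: number of primes `p ≤ n`. -/
def primePi (n : ℕ) : ℕ := ((Finset.Iic n).filter Nat.Prime).card

namespace PNTaux
open MeasureTheory Set

noncomputable def phi (u : ℝ) : ℝ := Chebyshev.psi (Real.exp u) * Real.exp (-u)

theorem phi_measurable : Measurable phi :=
  (Chebyshev.psi_mono.measurable.comp Real.measurable_exp).mul (by fun_prop)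

theorem phi_nonneg (u : ℝ) : 0 ≤ phi u :=
  mul_nonneg (Chebyshev.psi_nonneg _) (Real.exp_pos _).le

theorem phi_le (u : ℝ) : phi u ≤ Real.log 4 + 4 := by
  unfold phi
  rw [Real.exp_neg, ← div_eq_mul_inv, div_le_iff₀ (Real.exp_pos _)]
  exact Chebyshev.psi_le_const_mul_self (Real.exp_pos _).le

theorem phi_mono : Monotone fun u => phi u * Real.exp u := by
  have : (fun u => phi u * Real.exp u) = fun u => Chebyshev.psi (Real.exp u) := by
    ext u
    rw [phi, mul_assoc, ← Real.exp_add]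
    simp
  rw [this]
  exact Chebyshev.psi_mono.comp Real.exp_monotone

theorem phi_zero_of_nonpos {u : ℝ} (hu : u ≤ 0) : phi u = 0 := by
  rw [phi, Chebyshev.psi_eq_zero_of_le_one (by simpa using hu), zero_mul]

noncomputable def HH (s : ℂ) : ℂ :=
  (ArithmeticFunction.vonMangoldt.LFunctionResidueClassAux (1 : ZMod 1) s - 1) / s

theorem HH_cont : ContinuousOn HH {s | 1 ≤ s.re} := by
  refine ((ArithmeticFunction.vonMangoldt.continuousOn_LFunctionResidueClassAux
    (1 : ZMod 1)).sub continuousOn_const).div continuousOn_id ?_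
  rintro s hs rfl
  simp at hs
  linarith

theorem laplace (s : ℂ) (hs : 1 < s.re) :
    ∫ u in Ioi (0:ℝ), ((phi u - 1 : ℝ) : ℂ) * Complex.exp (-(s - 1) * u) = HH s := by
  have hres : ∀ n : ℕ, ArithmeticFunction.vonMangoldt.residueClass (1 : ZMod 1) n =
      ArithmeticFunction.vonMangoldt n := by
    intro n
    have hn : n ∈ {n : ℕ | (n : ZMod 1) = 1} :=
      show ((n : ZMod 1) = 1) from Subsingleton.elim _ _
    exact Set.indicator_of_mem hn (fun k : ℕ => ArithmeticFunction.vonMangoldt k)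
  have hs0 : s ≠ 0 := by
    rintro rfl
    simp at hs
    linarith
  have hs1 : s - 1 ≠ 0 := by
    intro h
    rw [sub_eq_zero.1 h] at hs
    simp at hs
  have hpsi : ∀ x : ℝ, ∑ k ∈ Finset.Icc 1 ⌊x⌋₊, ArithmeticFunction.vonMangoldt k =
      Chebyshev.psi x := fun x => rfl
  have hO : (fun n : ℕ => ∑ k ∈ Finset.Icc 1 n,
      ArithmeticFunction.vonMangoldt.residueClass (1 : ZMod 1) k) =O[atTop]
      fun n : ℕ => (n : ℝ) ^ (1:ℝ) := by
    apply Asymptotics.IsBigO.of_bound (Real.log 4 + 4)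
    filter_upwards with n
    simp only [hres, Real.rpow_one]
    have := hpsi n
    rw [Nat.floor_natCast] at this
    rw [this, Real.norm_of_nonneg (Chebyshev.psi_nonneg _), Real.norm_of_nonneg (by positivity)]
    exact Chebyshev.psi_le_const_mul_self (by positivity)
  have h1 := LSeries_eq_mul_integral_of_nonneg _ zero_le_one hs hO
    (ArithmeticFunction.vonMangoldt.residueClass_nonneg _)
  have h2 := ArithmeticFunction.vonMangoldt.eqOn_LFunctionResidueClassAux
    (a := (1 : ZMod 1)) isUnit_one hs
  simp only [Nat.totient_one, Nat.cast_one, inv_one] at h2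
  have h3 : ∫ t in Ioi (1:ℝ), (∑ k ∈ Finset.Icc 1 ⌊t⌋₊,
      ((ArithmeticFunction.vonMangoldt.residueClass (1 : ZMod 1) k : ℝ) : ℂ)) *
        (t : ℂ) ^ (-(s + 1)) =
      ∫ u in Ioi (0:ℝ), (phi u : ℂ) * Complex.exp (-(s - 1) * u) := by
    rw [← Real.exp_zero, ← integral_comp_exp_Ioi]
    congr 1
    ext u
    have : ∑ k ∈ Finset.Icc 1 ⌊Real.exp u⌋₊,
      ((ArithmeticFunction.vonMangoldt.residueClass (1 : ZMod 1) k : ℝ) : ℂ) =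
        (Chebyshev.psi (Real.exp u) : ℂ) := by
      rw [← hpsi]
      push_cast
      simp only [hres]
    rw [this, Complex.cpow_def_of_ne_zero (by simp [Complex.exp_ne_zero]),
      ← Complex.ofReal_log (Real.exp_pos _).le, Real.log_exp, phi, Complex.real_smul]
    push_cast
    rw [mul_assoc, ← Complex.exp_add, mul_left_comm, ← Complex.exp_add]
    congr 2
    ring
  have hI : IntegrableOn (fun u : ℝ => Complex.exp (-(s - 1) * u)) (Ioi 0) :=
    integrableOn_exp_mul_complex_Ioi (by simpa using hs) 0
  have hI2 : IntegrableOn (fun u : ℝ => (phi u : ℂ) * Complex.exp (-(s - 1) * u)) (Ioi 0) := by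
    refine hI.bdd_mul (c := Real.log 4 + 4)
      (Complex.measurable_ofReal.comp phi_measurable).aestronglyMeasurable ?_
    filter_upwards with u
    rw [Complex.norm_real, Real.norm_of_nonneg (phi_nonneg u)]
    exact phi_le u
  have h4 : ∫ u in Ioi (0:ℝ), ((phi u - 1 : ℝ) : ℂ) * Complex.exp (-(s - 1) * u) =
      (∫ u in Ioi (0:ℝ), (phi u : ℂ) * Complex.exp (-(s - 1) * u)) -
        ∫ u in Ioi (0:ℝ), Complex.exp (-(s - 1) * u) := by
    rw [← integral_sub hI2 hI]
    congr 1
    ext u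
    push_cast
    ring
  rw [h4, integral_exp_mul_complex_Ioi (by simpa using hs), ← h3, HH, h2]
  rw [h1]
  simp only [Complex.ofReal_zero, mul_zero, Complex.exp_zero]
  field_simp
  ring


noncomputable def KF (v : ℝ) : ℝ := 2 * ∫ t in (0:ℝ)..1, (1 - t) * Real.cos (t * v)

noncomputable def tent (t : ℝ) : ℂ := ((max (1 - |t|) 0 : ℝ) : ℂ)

theorem tent_cont : Continuous tent := by unfold tent; fun_prop

theorem tent_eq_zero {t : ℝ} (ht : 1 ≤ |t|) : tent t = 0 := by
  rw [tent, max_eq_right (by linarith), Complex.ofReal_zero]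

theorem KF_cont : Continuous KF := by
  unfold KF
  refine continuous_const.mul ?_
  apply intervalIntegral.continuous_parametric_intervalIntegral_of_continuous'
  fun_prop

theorem KF_zero : KF 0 = 1 := by
  simp only [KF, mul_zero, Real.cos_zero, mul_one]
  rw [intervalIntegral.integral_sub (by simp) (by simp)]
  norm_num [integral_id]

theorem KF_mul_sq (v : ℝ) : KF v * v ^ 2 = 2 * (1 - Real.cos v) := by
  have key : ∫ t in (0:ℝ)..1, (1 - t) * Real.cos (t * v) * v ^ 2 = 1 - Real.cos v := by
    have hd : ∀ t ∈ uIcc (0:ℝ) 1, HasDerivAt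
        (fun t : ℝ => (1 - t) * (Real.sin (t * v) * v) - Real.cos (t * v))
        ((1 - t) * Real.cos (t * v) * v ^ 2) t := by
      intro t _
      have hl : HasDerivAt (fun t : ℝ => t * v) v t := by
        simpa using (hasDerivAt_id t).mul_const v
      have h1 : HasDerivAt (fun t : ℝ => 1 - t) (-1) t := by
        simpa using (hasDerivAt_id t).const_sub 1
      have := (h1.mul (hl.sin.mul_const v)).sub hl.cos
      convert! this using 1
      ring
    rw [intervalIntegral.integral_eq_sub_of_hasDerivAt hd
      (Continuous.intervalIntegrable (by fun_prop) _ _)]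
    simp
    ring
  rw [intervalIntegral.integral_mul_const] at key
  rw [KF, mul_assoc, key]

theorem KF_nonneg (v : ℝ) : 0 ≤ KF v := by
  rcases eq_or_ne v 0 with rfl | hv
  · rw [KF_zero]; norm_num
  · have h := KF_mul_sq v
    have h1 := Real.cos_le_one v
    have h2 : 0 < v ^ 2 := by positivity
    by_contra hc
    push Not at hc
    nlinarith

theorem KF_le_two (v : ℝ) : KF v ≤ 2 := by
  have : ‖∫ t in (0:ℝ)..1, (1 - t) * Real.cos (t * v)‖ ≤ 1 * |(1:ℝ) - 0| := by
    apply intervalIntegral.norm_integral_le_of_norm_le_const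
    intro t ht
    rw [uIoc_of_le zero_le_one] at ht
    rw [norm_mul]
    have h1 : ‖1 - t‖ ≤ 1 := by
      rw [Real.norm_eq_abs, abs_le]
      constructor <;> linarith [ht.1, ht.2]
    have h2 : ‖Real.cos (t * v)‖ ≤ 1 := Real.abs_cos_le_one _
    exact mul_le_one₀ h1 (norm_nonneg _) h2
  have h := (le_abs_self _).trans this
  simp at h
  unfold KF
  linarith

theorem KF_integrable : Integrable KF := by
  refine (integrable_inv_one_add_sq.const_mul 6).mono' KF_cont.aestronglyMeasurable ?_
  filter_upwards with v
  rw [Real.norm_of_nonneg (KF_nonneg v), ← div_eq_mul_inv, le_div_iff₀ (by positivity)]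
  have h := KF_mul_sq v
  have h1 := Real.neg_one_le_cos v
  have h2 := KF_le_two v
  linarith

theorem KF_integral_pos : 0 < ∫ v, KF v :=
  integral_pos_of_integrable_nonneg_nonzero (x := 0) KF_cont KF_integrable KF_nonneg
    (by rw [KF_zero]; norm_num)

theorem tent_fourier (v : ℝ) :
    ∫ t : ℝ, tent t * Complex.exp (-(Complex.I * t * v)) = (KF v : ℂ) := by
  have hcont : Continuous (fun t : ℝ => tent t * Complex.exp (-(Complex.I * t * v))) :=
    tent_cont.mul (by fun_prop)
  rw [← intervalIntegral.integral_eq_integral_of_support_subset (a := -1) (b := 1),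
    ← intervalIntegral.integral_add_adjacent_intervals (b := 0)
      (hcont.intervalIntegrable _ _) (hcont.intervalIntegrable _ _)]
  · have h1 : ∫ t in (-1:ℝ)..0, tent t * Complex.exp (-(Complex.I * t * v)) =
        ∫ t in (0:ℝ)..1, tent t * Complex.exp (Complex.I * t * v) := by
      have := intervalIntegral.integral_comp_neg (a := 0) (b := 1)
        (fun t : ℝ => tent t * Complex.exp (-(Complex.I * t * v)))
      rw [neg_zero] at this
      rw [← this]
      congr 1
      ext t
      simp [tent]
    have hcont' : Continuous (fun t : ℝ => tent t * Complex.exp (Complex.I * t * v)) :=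
      tent_cont.mul (by fun_prop)
    rw [h1, ← intervalIntegral.integral_add
      (hcont'.intervalIntegrable _ _) (hcont.intervalIntegrable _ _), KF]
    push_cast
    rw [← intervalIntegral.integral_ofReal, ← intervalIntegral.integral_const_mul]
    apply intervalIntegral.integral_congr
    intro t ht
    rw [uIcc_of_le zero_le_one] at ht
    have : tent t = ((1 - t : ℝ) : ℂ) := by
      rw [tent, abs_of_nonneg ht.1, max_eq_left (by linarith [ht.2])]
    simp only [this]
    push_cast
    rw [Complex.cos]
    rw [show (t:ℂ) * v * Complex.I = Complex.I * t * v by ring,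
      show -((t:ℂ) * v) * Complex.I = -(Complex.I * t * v) by ring]
    ring
  · intro t ht
    by_contra hc
    apply ht
    have : 1 ≤ |t| := by
      by_contra h
      push Not at h
      rw [abs_lt] at h
      exact hc ⟨h.1, h.2.le⟩
    simp [tent_eq_zero this]

theorem tent_scaled_fourier (lam : ℝ) (hl : 0 < lam) (v : ℝ) :
    ∫ t : ℝ, tent (t / lam) * Complex.exp (-(Complex.I * t * v)) =
      ((lam * KF (lam * v) : ℝ) : ℂ) := by
  have h := Measure.integral_comp_div
    (fun s : ℝ => tent s * Complex.exp (-(Complex.I * s * ((lam * v : ℝ) : ℂ)))) lam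
  rw [tent_fourier, abs_of_pos hl] at h
  rw [Complex.ofReal_mul, ← Complex.real_smul, ← h]
  congr 1
  ext t
  congr 2
  have : (lam : ℂ) ≠ 0 := by exact_mod_cast hl.ne'
  push_cast
  field_simp

theorem tent_scaled_compact (lam : ℝ) (hl : 0 < lam) :
    HasCompactSupport (fun t : ℝ => tent (t / lam)) := by
  apply HasCompactSupport.intro (isCompact_Icc (a := -lam) (b := lam))
  intro t ht
  apply tent_eq_zero
  rw [abs_div, abs_of_pos hl, le_div_iff₀ hl, one_mul]
  by_contra hc
  push Not at hc
  rw [abs_lt] at hc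
  exact ht ⟨hc.1.le, hc.2.le⟩


theorem convLimit (f : ℝ → ℝ) (M : ℝ) (hfm : Measurable f) (hfM : ∀ u, |f u| ≤ M)
    (H : ℂ → ℂ) (hH : ContinuousOn H {s | 1 ≤ s.re})
    (hL : ∀ s : ℂ, 1 < s.re → ∫ u in Ioi (0:ℝ), (f u : ℂ) * Complex.exp (-(s - 1) * u) = H s)
    (h : ℝ → ℂ) (hc : Continuous h) (hs : HasCompactSupport h)
    (K : ℝ → ℂ) (hK : ∀ v : ℝ, K v = ∫ t : ℝ, h t * Complex.exp (-(Complex.I * t * v)))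
    (hKi : Integrable K) :
    Tendsto (fun y : ℝ => ∫ u in Ioi (0:ℝ), (f u : ℂ) * K (u - y)) atTop (nhds 0) := by
  have hM0 : 0 ≤ M := (abs_nonneg _).trans (hfM 0)
  have hhi : Integrable h := hc.integrable_of_hasCompactSupport hs
  -- Fubini
  have key1 : ∀ (y ε : ℝ), 0 < ε →
      ∫ t : ℝ, h t * Complex.exp (Complex.I * t * y) * H (1 + ε + Complex.I * t) =
      ∫ u in Ioi (0:ℝ), (f u : ℂ) * Complex.exp (-(ε * u : ℂ)) * K (u - y) := by
    intro y ε hε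
    have e1 : ∀ t : ℝ, h t * Complex.exp (Complex.I * t * y) * H (1 + ε + Complex.I * t) =
        ∫ u in Ioi (0:ℝ), h t * ((f u : ℂ) * Complex.exp (-(ε * u : ℂ))) *
          Complex.exp (-(Complex.I * t * (u - y))) := by
      intro t
      rw [← hL _ (by simp [hε]), ← integral_const_mul]
      congr 1
      ext u
      rw [show -((1:ℂ) + ε + Complex.I * t - 1) * u = -(ε * u) + (-(Complex.I * t * u)) by ring,
        show -(Complex.I * t * ((u:ℂ) - y)) = -(Complex.I * t * u) + Complex.I * t * y by ring,
        Complex.exp_add, Complex.exp_add]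
      ring
    have e2 : ∀ u : ℝ, (f u : ℂ) * Complex.exp (-(ε * u : ℂ)) * K (u - y) =
        ∫ t : ℝ, h t * ((f u : ℂ) * Complex.exp (-(ε * u : ℂ))) *
          Complex.exp (-(Complex.I * t * (u - y))) := by
      intro u
      rw [hK, ← integral_const_mul]
      congr 1
      ext t
      push_cast
      ring
    simp_rw [e1, e2]
    apply integral_integral_swap
    have hg : Integrable (fun u : ℝ => (f u : ℂ) * Complex.exp (-(ε * u : ℂ)))
        (volume.restrict (Ioi 0)) := by
      have h1 : IntegrableOn (fun u : ℝ => Complex.exp ((-ε:ℂ) * u)) (Ioi 0) :=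
        integrableOn_exp_mul_complex_Ioi (by simpa using hε) 0
      have h2 := h1.bdd_mul (f := fun u : ℝ => (f u : ℂ)) (c := M)
        (Complex.measurable_ofReal.comp hfm).aestronglyMeasurable
        (by filter_upwards with u; simpa using hfM u)
      refine h2.congr ?_
      filter_upwards with u
      simp
    have hp := hhi.mul_prod hg
    have hph : Continuous (fun z : ℝ × ℝ => Complex.exp (-(Complex.I * z.1 * (z.2 - y)))) := by
      fun_prop
    have := hp.bdd_mul (f := fun z : ℝ × ℝ => Complex.exp (-(Complex.I * z.1 * (z.2 - y)))) (c := 1)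
      hph.aestronglyMeasurable (by
        filter_upwards with z
        simp [Complex.norm_exp])
    refine this.congr ?_
    filter_upwards with z
    simp only [Function.uncurry]
    ring
  -- the limit ε → 0
  have key2 : ∀ y : ℝ,
      ∫ t : ℝ, h t * Complex.exp (Complex.I * t * y) * H (1 + Complex.I * t) =
      ∫ u in Ioi (0:ℝ), (f u : ℂ) * K (u - y) := by
    intro y
    have hKy : Integrable (fun u => K (u - y)) := hKi.comp_sub_right y
    have hcpt : IsCompact ((fun p : ℝ × ℝ => (1 + p.1 + Complex.I * p.2 : ℂ)) ''
        (Icc (0:ℝ) 1 ×ˢ tsupport h)) :=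
      (isCompact_Icc.prod hs).image (by fun_prop)
    have hHc : ContinuousOn H ((fun p : ℝ × ℝ => (1 + p.1 + Complex.I * p.2 : ℂ)) ''
        (Icc (0:ℝ) 1 ×ˢ tsupport h)) := by
      apply hH.mono
      rintro _ ⟨p, hp, rfl⟩
      simpa using hp.1.1
    obtain ⟨C, hC⟩ := hcpt.exists_bound_of_continuousOn hHc
    have hline : ∀ ε : ℝ, 0 ≤ ε → Continuous (fun t : ℝ => H (1 + ε + Complex.I * t)) := by
      intro ε hε
      apply hH.comp_continuous (by fun_prop)
      intro t
      simpa using hε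
    have L1 : Tendsto (fun ε : ℝ => ∫ t : ℝ, h t * Complex.exp (Complex.I * t * y) *
        H (1 + ε + Complex.I * t)) (nhdsWithin 0 (Ioi 0))
        (nhds (∫ t : ℝ, h t * Complex.exp (Complex.I * t * y) * H (1 + Complex.I * t))) := by
      apply tendsto_integral_filter_of_dominated_convergence (fun t => ‖h t‖ * C)
      · filter_upwards [self_mem_nhdsWithin] with ε hε
        exact ((hc.mul (by fun_prop)).mul (hline ε (le_of_lt hε))).aestronglyMeasurable
      · filter_upwards [self_mem_nhdsWithin,
          mem_nhdsWithin_of_mem_nhds (Iic_mem_nhds (zero_lt_one' ℝ))] with ε hε hε1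
        filter_upwards with t
        have : ‖Complex.exp (Complex.I * t * y)‖ = 1 := by simp [Complex.norm_exp]
        rw [norm_mul, norm_mul, this, mul_one]
        by_cases ht : t ∈ tsupport h
        · exact mul_le_mul_of_nonneg_left
            (hC _ ⟨(ε, t), ⟨⟨le_of_lt hε, hε1⟩, ht⟩, rfl⟩) (norm_nonneg _)
        · simp [image_eq_zero_of_notMem_tsupport ht]
      · exact hhi.norm.mul_const C
      · filter_upwards with t
        apply Tendsto.const_mul
        have h1 : Tendsto (fun ε : ℝ => (1 + ε + Complex.I * t : ℂ)) (nhdsWithin 0 (Ioi 0))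
            (nhdsWithin (1 + Complex.I * t) {s | 1 ≤ s.re}) := by
          apply tendsto_nhdsWithin_iff.2
          constructor
          · have : Continuous (fun ε : ℝ => (1 + ε + Complex.I * t : ℂ)) := by fun_prop
            have h2 := this.tendsto 0
            simp only [Complex.ofReal_zero, add_zero] at h2
            exact h2.mono_left nhdsWithin_le_nhds
          · filter_upwards [self_mem_nhdsWithin] with ε hε
            simpa using le_of_lt hε
        exact (hH (1 + Complex.I * t) (by simp)).tendsto.comp h1
    have L2 : Tendsto (fun ε : ℝ => ∫ u in Ioi (0:ℝ), (f u : ℂ) * Complex.exp (-(ε * u : ℂ)) *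
        K (u - y)) (nhdsWithin 0 (Ioi 0))
        (nhds (∫ u in Ioi (0:ℝ), (f u : ℂ) * K (u - y))) := by
      apply tendsto_integral_filter_of_dominated_convergence (fun u => M * ‖K (u - y)‖)
      · filter_upwards [self_mem_nhdsWithin] with ε hε
        refine AEStronglyMeasurable.mul ?_ hKy.aestronglyMeasurable.restrict
        apply Measurable.aestronglyMeasurable
        fun_prop
      · filter_upwards [self_mem_nhdsWithin] with ε hε
        filter_upwards [ae_restrict_mem measurableSet_Ioi] with u hu
        rw [norm_mul, norm_mul]
        gcongr
        have h1 : ‖Complex.exp (-(ε * u : ℂ))‖ ≤ 1 := by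
          rw [Complex.norm_exp]
          simpa using mul_nonneg (le_of_lt hε) (le_of_lt hu)
        have h2 : ‖(f u : ℂ)‖ ≤ M := by simpa using hfM u
        calc _ ≤ M * 1 := by gcongr
          _ = M := mul_one M
      · exact (hKy.norm.const_mul M).restrict
      · filter_upwards with u
        apply Tendsto.mul_const
        have : Continuous (fun ε : ℝ => (f u : ℂ) * Complex.exp (-(ε * u : ℂ))) := by fun_prop
        have h2 := this.tendsto 0
        simp only [Complex.ofReal_zero, zero_mul, neg_zero, Complex.exp_zero, mul_one] at h2
        exact h2.mono_left nhdsWithin_le_nhds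
    refine tendsto_nhds_unique L1 (L2.congr' ?_)
    filter_upwards [self_mem_nhdsWithin] with ε hε
    exact (key1 y ε hε).symm
  -- Riemann-Lebesgue
  have RL := Real.tendsto_integral_exp_smul_cocompact (fun t : ℝ => h t * H (1 + Complex.I * t))
  have hy : Tendsto (fun y : ℝ => -(y / (2 * Real.pi))) atTop (cocompact ℝ) := by
    have : Tendsto (fun y : ℝ => -(y / (2 * Real.pi))) atTop atBot :=
      tendsto_neg_atTop_atBot.comp (tendsto_id.atTop_div_const (by positivity))
    exact this.mono_right atBot_le_cocompact
  refine (RL.comp hy).congr fun y => ?_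
  rw [← key2 y]
  simp only [Function.comp]
  congr 1
  ext t
  rw [Circle.smul_def, Real.fourierChar_apply, smul_eq_mul]
  have : (((2 * Real.pi * -(t * -(y / (2 * Real.pi))) : ℝ) : ℂ) * Complex.I) =
      Complex.I * t * y := by
    have hpi : (Real.pi : ℂ) ≠ 0 := by exact_mod_cast Real.pi_ne_zero
    push_cast
    field_simp
  rw [this]
  ring


theorem tauberian (φ K : ℝ → ℝ) (M I : ℝ) (hφm : Measurable φ) (hφ0 : ∀ u, 0 ≤ φ u)
    (hφM : ∀ u, φ u ≤ M) (hmono : Monotone fun u => φ u * Real.exp u)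
    (hK0 : ∀ w, 0 ≤ K w) (hKi : Integrable K) (hI : ∫ w, K w = I) (hIpos : 0 < I)
    (hlim : ∀ lam : ℝ, 0 < lam →
      Tendsto (fun y : ℝ => ∫ w : ℝ, φ (y + w / lam) * K w) atTop (nhds I)) :
    Tendsto φ atTop (nhds 1) := by
  have hM0 : 0 ≤ M := (hφ0 0).trans (hφM 0)
  have hJ : Tendsto (fun W : ℝ => ∫ w in Icc (-W) W, K w) atTop (nhds I) := by
    rw [← hI]
    exact (aecover_Icc tendsto_neg_atTop_atBot tendsto_id).integral_tendsto_of_countably_generated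
      hKi
  have hint : ∀ (y lam : ℝ), Integrable (fun w : ℝ => φ (y + w / lam) * K w) := by
    intro y lam
    refine hKi.bdd_mul (c := M) (Measurable.aestronglyMeasurable (by fun_prop)) ?_
    filter_upwards with w
    rw [Real.norm_eq_abs, abs_of_nonneg (hφ0 _)]
    exact hφM _
  have hcmp : ∀ a b : ℝ, ∀ d : ℝ, a ≤ b → b - a ≤ d → φ a * Real.exp (-d) ≤ φ b := by
    intro a b d hab hd
    have h1 := hmono hab
    simp only at h1
    have h2 : φ a * Real.exp (a - b) ≤ φ b := by
      rw [Real.exp_sub, ← mul_div_assoc, div_le_iff₀ (Real.exp_pos _)]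
      exact h1
    refine le_trans (mul_le_mul_of_nonneg_left (Real.exp_le_exp.2 (by linarith)) (hφ0 a)) h2
  have hup : ∀ (y δ W : ℝ), 0 < δ → 0 < W →
      φ (y - δ) * Real.exp (-(2 * δ)) * ∫ w in Icc (-W) W, K w ≤
        ∫ w : ℝ, φ (y + w / (W / δ)) * K w := by
    intro y δ W hδ hW
    rw [← integral_const_mul]
    refine le_trans ?_ (setIntegral_le_integral (s := Icc (-W) W) (hint y (W / δ)) ?_)
    · apply setIntegral_mono_on (hKi.integrableOn.const_mul _) (hint _ _).integrableOn
        measurableSet_Icc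
      intro w hw
      apply mul_le_mul_of_nonneg_right _ (hK0 w)
      have h1 : -δ ≤ w / (W / δ) := by
        rw [le_div_iff₀ (by positivity)]
        have : -δ * (W / δ) = -W := by field_simp
        linarith [hw.1]
      have h2 : w / (W / δ) ≤ δ := by
        rw [div_le_iff₀ (by positivity)]
        have : δ * (W / δ) = W := by field_simp
        linarith [hw.2]
      apply hcmp <;> linarith
    · filter_upwards with w
      exact mul_nonneg (hφ0 _) (hK0 _)
  have hlo : ∀ (y δ W : ℝ), 0 < δ → 0 < W →
      ∫ w : ℝ, φ (y + w / (W / δ)) * K w ≤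
      φ (y + δ) * Real.exp (2 * δ) * I + M * (I - ∫ w in Icc (-W) W, K w) := by
    intro y δ W hδ hW
    have hsplit := integral_add_compl (μ := volume) (s := Icc (-W) W) measurableSet_Icc
      (hint y (W / δ))
    have hsplit' := integral_add_compl (μ := volume) (s := Icc (-W) W) measurableSet_Icc hKi
    have A1 : ∫ w in Icc (-W) W, φ (y + w / (W / δ)) * K w ≤
        φ (y + δ) * Real.exp (2 * δ) * I := by
      refine le_trans (b := ∫ w in Icc (-W) W, φ (y + δ) * Real.exp (2 * δ) * K w) ?_ ?_
      · apply setIntegral_mono_on (hint _ _).integrableOn (hKi.integrableOn.const_mul _)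
          measurableSet_Icc
        intro w hw
        apply mul_le_mul_of_nonneg_right _ (hK0 w)
        have h1 : -δ ≤ w / (W / δ) := by
          rw [le_div_iff₀ (by positivity)]
          have : -δ * (W / δ) = -W := by field_simp
          linarith [hw.1]
        have h2 : w / (W / δ) ≤ δ := by
          rw [div_le_iff₀ (by positivity)]
          have : δ * (W / δ) = W := by field_simp
          linarith [hw.2]
        have h3 := hcmp (y + w / (W / δ)) (y + δ) (2 * δ) (by linarith) (by linarith)
        rw [Real.exp_neg, ← div_eq_mul_inv, div_le_iff₀ (Real.exp_pos _)] at h3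
        exact h3
      · rw [integral_const_mul]
        apply mul_le_mul_of_nonneg_left _ (mul_nonneg (hφ0 _) (Real.exp_pos _).le)
        rw [← hI]
        exact setIntegral_le_integral hKi (by filter_upwards with w using hK0 w)
    have A2 : ∫ w in (Icc (-W) W)ᶜ, φ (y + w / (W / δ)) * K w ≤
        M * ∫ w in (Icc (-W) W)ᶜ, K w := by
      rw [← integral_const_mul]
      apply setIntegral_mono_on (hint _ _).integrableOn (hKi.integrableOn.const_mul _)
        measurableSet_Icc.compl
      intro w hw
      exact mul_le_mul_of_nonneg_right (hφM _) (hK0 w)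
    have A3 : ∫ w in (Icc (-W) W)ᶜ, K w = I - ∫ w in Icc (-W) W, K w := by linarith
    rw [A3] at A2
    linarith
  rw [Metric.tendsto_nhds]
  intro ε hε
  have evU : ∀ᶠ y in atTop, φ y < 1 + ε := by
    have c1 : Tendsto (fun δ : ℝ => (1 + ε) * Real.exp (-(2 * δ))) (nhdsWithin 0 (Ioi 0))
        (nhds (1 + ε)) := by
      have : Continuous (fun δ : ℝ => (1 + ε) * Real.exp (-(2 * δ))) := by fun_prop
      have h2 := this.tendsto 0
      simp only [mul_zero, neg_zero, Real.exp_zero, mul_one] at h2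
      exact h2.mono_left nhdsWithin_le_nhds
    obtain ⟨δ, hδ1, hδ⟩ := ((c1.eventually_const_lt (show (1:ℝ) < 1 + ε by linarith)).and
      self_mem_nhdsWithin).exists
    replace hδ : 0 < δ := hδ
    have c2 := (hJ.const_mul ((1 + ε) * Real.exp (-(2 * δ)))).eventually_const_lt
      (show I < _ by nlinarith)
    obtain ⟨W, hW1, hW⟩ := (c2.and (eventually_gt_atTop 0)).exists
    have c3 := (hlim (W / δ) (by positivity)).eventually_lt_const hW1
    have c4 : ∀ᶠ y in atTop, φ (y - δ) < 1 + ε := by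
      filter_upwards [c3] with y hy
      have h1 := hup y δ W hδ hW
      have h2 := h1.trans_lt hy
      have hJ0 : 0 ≤ ∫ w in Icc (-W) W, K w := integral_nonneg hK0
      by_contra hcon
      push Not at hcon
      have : (1 + ε) * Real.exp (-(2 * δ)) * ∫ w in Icc (-W) W, K w ≤
        φ (y - δ) * Real.exp (-(2 * δ)) * ∫ w in Icc (-W) W, K w := by gcongr
      linarith
    have := (tendsto_atTop_add_const_right atTop δ tendsto_id).eventually c4
    simpa using this
  have evL : ∀ᶠ y in atTop, 1 - ε < φ y := by
    have c1 : Tendsto (fun δ : ℝ => (1 - ε) * Real.exp ((2 * δ))) (nhdsWithin 0 (Ioi 0))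
        (nhds (1 - ε)) := by
      have : Continuous (fun δ : ℝ => (1 - ε) * Real.exp ((2 * δ))) := by fun_prop
      have h2 := this.tendsto 0
      simp only [mul_zero, Real.exp_zero, mul_one] at h2
      exact h2.mono_left nhdsWithin_le_nhds
    obtain ⟨δ, hδ1, hδ⟩ := ((c1.eventually_lt_const (show 1 - ε < (1:ℝ) by linarith)).and
      self_mem_nhdsWithin).exists
    replace hδ : 0 < δ := hδ
    have c2 := ((hJ.const_sub I).const_mul M).const_add ((1 - ε) * Real.exp (2 * δ) * I)
    have c2' := c2.eventually_lt_const (u := I) (by simp only [sub_self, mul_zero]; nlinarith)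
    obtain ⟨W, hW1, hW⟩ := (c2'.and (eventually_gt_atTop 0)).exists
    have c3 := (hlim (W / δ) (by positivity)).eventually_const_lt hW1
    have c4 : ∀ᶠ y in atTop, 1 - ε < φ (y + δ) := by
      filter_upwards [c3] with y hy
      have h1 := hlo y δ W hδ hW
      have h2 := hy.trans_le h1
      by_contra hcon
      push Not at hcon
      have : φ (y + δ) * Real.exp (2 * δ) * I ≤ (1 - ε) * Real.exp (2 * δ) * I := by gcongr
      linarith
    have := (tendsto_atTop_add_const_right atTop (-δ) tendsto_id).eventually c4
    simpa using this
  filter_upwards [evU, evL] with y h1 h2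
  rw [Real.dist_eq, abs_lt]
  constructor <;> linarith


theorem phi_tendsto : Tendsto phi atTop (nhds 1) := by
  refine tauberian phi KF (Real.log 4 + 4) (∫ v, KF v) phi_measurable phi_nonneg phi_le phi_mono
    KF_nonneg KF_integrable rfl KF_integral_pos ?_
  intro lam hl
  have hlog : 0 < Real.log 4 := Real.log_pos (by norm_num)
  have hbd : ∀ u, |phi u - 1| ≤ Real.log 4 + 4 := by
    intro u
    rw [abs_le]
    constructor <;> linarith [phi_nonneg u, phi_le u]
  have hsc : Integrable (fun v : ℝ => lam * KF (lam * v)) :=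
    (KF_integrable.comp_mul_left' hl.ne').const_mul lam
  have h1 := convLimit (fun u => phi u - 1) (Real.log 4 + 4) (phi_measurable.sub_const 1) hbd
    HH HH_cont laplace (fun t => tent (t / lam)) (tent_cont.comp (by fun_prop))
    (tent_scaled_compact lam hl) (fun v => ((lam * KF (lam * v) : ℝ) : ℂ))
    (fun v => (tent_scaled_fourier lam hl v).symm) hsc.ofReal
  have h1' : Tendsto (fun y : ℝ => ∫ u in Ioi (0:ℝ), (phi u - 1) * (lam * KF (lam * (u - y))))
      atTop (nhds 0) := by
    have h2 := (Complex.continuous_re.tendsto 0).comp h1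
    rw [Complex.zero_re] at h2
    refine h2.congr fun y => ?_
    simp only [Function.comp]
    simp_rw [← Complex.ofReal_mul]
    rw [integral_complex_ofReal, Complex.ofReal_re]
  have hscy : ∀ y : ℝ, Integrable (fun u : ℝ => lam * KF (lam * (u - y))) := fun y =>
    hsc.comp_sub_right y
  have hphiy : ∀ y : ℝ, Integrable (fun u : ℝ => phi u * (lam * KF (lam * (u - y)))) := by
    intro y
    refine (hscy y).bdd_mul (c := Real.log 4 + 4) phi_measurable.aestronglyMeasurable ?_
    filter_upwards with u
    rw [Real.norm_of_nonneg (phi_nonneg u)]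
    exact phi_le u
  -- change of variables on the whole line
  have cv : ∀ (g : ℝ → ℝ) (y : ℝ), ∫ u : ℝ, g u * (lam * KF (lam * (u - y))) =
      ∫ w : ℝ, g (y + w / lam) * KF w := by
    intro g y
    have e1 := integral_sub_right_eq_self (μ := volume)
      (fun u : ℝ => g (y + u) * (lam * KF (lam * u))) y
    have e2 := Measure.integral_comp_div (fun u : ℝ => g (y + u) * KF (lam * u)) lam
    rw [abs_of_pos hl, smul_eq_mul, ← integral_const_mul] at e2
    calc ∫ u : ℝ, g u * (lam * KF (lam * (u - y)))
        = ∫ u : ℝ, g (y + (u - y)) * (lam * KF (lam * (u - y))) := by simp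
      _ = ∫ u : ℝ, g (y + u) * (lam * KF (lam * u)) := e1
      _ = ∫ u : ℝ, lam * (g (y + u) * KF (lam * u)) := by
          congr 1; ext u; ring
      _ = _ := e2.symm
      _ = _ := by
          congr 1; ext u
          rw [mul_div_cancel₀ _ hl.ne']
  have h2 : Tendsto (fun y : ℝ => ∫ u in Ioi (0:ℝ), lam * KF (lam * (u - y))) atTop
      (nhds (∫ v, KF v)) := by
    have hset : ∀ y : ℝ, ∫ u in Ioi (0:ℝ), lam * KF (lam * (u - y)) =
        ∫ w in Ioi (-(lam * y)), KF w := by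
      intro y
      have := cv ((Ioi (0:ℝ)).indicator 1) y
      rw [← integral_indicator measurableSet_Ioi, ← integral_indicator measurableSet_Ioi]
      refine Eq.trans ?_ (this.trans ?_)
      · congr 1; ext u
        by_cases hu : 0 < u <;> simp [indicator, hu]
      · congr 1; ext w
        have : 0 < y + w / lam ↔ -(lam * y) < w := by
          rw [← mul_pos_iff_of_pos_left hl, mul_add, mul_div_cancel₀ _ hl.ne']
          constructor <;> intro h <;> linarith
        by_cases hw : -(lam * y) < w <;> simp [indicator, this, hw]
    simp_rw [hset]
    have ha : Tendsto (fun y : ℝ => -(lam * y)) atTop atBot :=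
      tendsto_neg_atTop_atBot.comp (tendsto_id.const_mul_atTop hl)
    exact (aecover_Ioi ha).integral_tendsto_of_countably_generated KF_integrable
  have h3 := h1'.add h2
  rw [zero_add] at h3
  refine h3.congr fun y => ?_
  rw [← cv phi y, ← integral_add]
  · rw [← integral_indicator measurableSet_Ioi]
    congr 1; ext u
    by_cases hu : 0 < u
    · simp only [indicator, mem_Ioi, hu, if_true]
      ring
    · simp [indicator, hu, phi_zero_of_nonpos (not_lt.1 hu)]
  · refine (((hphiy y).sub (hscy y)).congr ?_).integrableOn
    filter_upwards with u
    simp only [Pi.sub_apply]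
    ring
  · exact (hscy y).integrableOn

theorem psi_tendsto : Tendsto (fun x : ℝ => Chebyshev.psi x / x) atTop (nhds 1) := by
  refine (phi_tendsto.comp Real.tendsto_log_atTop).congr' ?_
  filter_upwards [eventually_gt_atTop 0] with x hx
  simp only [Function.comp, phi, Real.exp_neg, Real.exp_log hx]
  rfl

theorem final (h : Tendsto (fun x : ℝ => Chebyshev.psi x / x) atTop (nhds 1)) :
    Tendsto (fun n : ℕ => (primePi n : ℝ) * Real.log n / n) atTop (nhds 1) := by
  have h1 : Tendsto (fun x : ℝ => (Chebyshev.psi x - Chebyshev.theta x) / x) atTop (nhds 0) := by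
    have hO : (fun x : ℝ => (Chebyshev.psi x - Chebyshev.theta x) / x) =O[atTop]
        fun x => Real.sqrt x / x := by
      exact (Chebyshev.isBigO_psi_sub_theta_sqrt).mul (Asymptotics.isBigO_refl _ _)
    refine hO.trans_tendsto ?_
    simp_rw [Real.sqrt_div_self']
    simp_rw [one_div]
    exact Real.tendsto_sqrt_atTop.inv_tendsto_atTop
  have h2 : Tendsto (fun x : ℝ => Chebyshev.theta x / x) atTop (nhds 1) := by
    have := h.sub h1
    rw [sub_zero] at this
    refine this.congr fun x => ?_
    ring
  have h3 : Tendsto (fun x : ℝ => ((Nat.primeCounting ⌊x⌋₊ : ℝ) - Chebyshev.theta x / Real.log x)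
      * (Real.log x / x)) atTop (nhds 0) := by
    have hO := Chebyshev.primeCounting_sub_theta_div_log_isBigO.mul
      (Asymptotics.isBigO_refl (fun x : ℝ => Real.log x / x) atTop)
    refine hO.trans_tendsto ?_
    refine (Real.tendsto_log_atTop.inv_tendsto_atTop).congr' ?_
    filter_upwards [eventually_gt_atTop 1] with x hx
    have := Real.log_pos hx
    simp only [Pi.inv_apply]
    field_simp
  have h4 : Tendsto (fun x : ℝ => (Nat.primeCounting ⌊x⌋₊ : ℝ) * Real.log x / x)
      atTop (nhds 1) := by
    have := h3.add h2
    rw [zero_add] at this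
    refine this.congr' ?_
    filter_upwards [eventually_gt_atTop 1] with x hx
    have := Real.log_pos hx
    field_simp
    ring
  refine (h4.comp tendsto_natCast_atTop_atTop).congr fun n => ?_
  have : primePi n = Nat.primeCounting n := by
    rw [primePi, Nat.primeCounting, Nat.primeCounting', Nat.count_eq_card_filter_range]
    congr 1
    ext k
    simp
  simp [this]
end PNTaux

/-- π(n)/n = (1/ln n)(1 + o(1)), i.e. π(n)·(ln n)/n → 1 as n → ∞. -/
theorem primePi_density_asymptotic :
    Tendsto (fun n : ℕ => (primePi n : ℝ) * Real.log n / n) atTop (nhds 1) := by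
  exact PNTaux.final PNTaux.psi_tendsto
end

section
/- Hardy–Ramanujan theorem: for every ε > 0, (1/n)·#{m : 1 ≤ m ≤ n, |ω(m) - ln ln n| ≤ (ln ln n)^{1/2 + ε}} → 1 as n → ∞. -/
open Filter
open scoped Classical

lemma hr_log_factorial (n : ℕ) : Real.log (n.factorial : ℝ) =
    ∑ p ∈ Nat.primesLE n, (padicValNat p n.factorial : ℝ) * Real.log p := by
  conv_lhs => rw [← Nat.prod_factorization_pow_eq_self (Nat.factorial_ne_zero n)]
  rw [Finsupp.prod, Nat.support_factorization]
  have : n.factorial.primeFactors = Nat.primesLE n := by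
    ext p
    simp only [Nat.mem_primeFactors, Nat.mem_primesLE]
    constructor
    · rintro ⟨hp, hd, _⟩
      exact ⟨(hp.dvd_factorial).1 hd, hp⟩
    · rintro ⟨h, hp⟩
      exact ⟨hp, (hp.dvd_factorial).2 h, Nat.factorial_ne_zero n⟩
  rw [this]
  push_cast
  rw [Real.log_prod]
  · refine Finset.sum_congr rfl fun p hp => ?_
    rw [Real.log_pow, Nat.factorization_def _ (Nat.prime_of_mem_primesLE hp)]
  · intro p hp
    have := (Nat.prime_of_mem_primesLE hp).pos
    positivity

lemma hr_val_lower (n p : ℕ) (hp : p.Prime) :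
    (n : ℝ) / p - 1 ≤ padicValNat p n.factorial := by
  have := Fact.mk hp
  have h1 : n / p ≤ padicValNat p n.factorial := by
    rw [padicValNat_factorial (b := Nat.log p n + 2) (by omega)]
    have := Finset.single_le_sum (f := fun i => n / p ^ i) (s := Finset.Ico 1 (Nat.log p n + 2))
      (fun i _ => Nat.zero_le _) (show 1 ∈ _ by simp)
    simpa using this
  have h2 : (n : ℝ) / p < (n / p : ℕ) + 1 := by
    rw [div_lt_iff₀ (by exact_mod_cast hp.pos)]
    exact_mod_cast Nat.lt_mul_of_div_lt (Nat.lt_succ_self _) hp.pos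
  have h3 : ((n / p : ℕ) : ℝ) ≤ padicValNat p n.factorial := by exact_mod_cast h1
  linarith

lemma hr_val_upper (n p : ℕ) (hp : p.Prime) :
    (padicValNat p n.factorial : ℝ) ≤ (n : ℝ) / (p - 1) := by
  have := Fact.mk hp
  have h1 := sub_one_mul_padicValNat_factorial (p := p) n
  have h2 : (p - 1) * padicValNat p n.factorial ≤ n := by rw [h1]; exact Nat.sub_le _ _
  have h3 : (1 : ℝ) < p := by exact_mod_cast hp.one_lt
  rw [le_div_iff₀ (by linarith)]
  have : (((p - 1) * padicValNat p n.factorial : ℕ) : ℝ) ≤ n := by exact_mod_cast h2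
  rw [Nat.cast_mul, Nat.cast_sub hp.one_lt.le] at this
  push_cast at this
  linarith

/-- The first Mertens sum. -/
noncomputable def hrA (n : ℕ) : ℝ := ∑ p ∈ Nat.primesLE n, Real.log p / p

/-- The sum of reciprocals of the primes. -/
noncomputable def hrS (n : ℕ) : ℝ := ∑ p ∈ Nat.primesLE n, (1 : ℝ) / p

lemma hrA_upper (n : ℕ) (hn : 1 ≤ n) : hrA n ≤ Real.log n + Real.log 4 := by
  have hn' : (0 : ℝ) < n := by exact_mod_cast hn
  have h1 : n * hrA n - Chebyshev.theta n ≤ Real.log (n.factorial : ℝ) := by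
    rw [hr_log_factorial, Chebyshev.theta_eq_sum_primesLE_log, hrA, Finset.mul_sum,
      ← Finset.sum_sub_distrib]
    refine Finset.sum_le_sum fun p hp => ?_
    have hp' := Nat.prime_of_mem_primesLE hp
    have hl : 0 ≤ Real.log p := Real.log_natCast_nonneg p
    have := mul_le_mul_of_nonneg_right (hr_val_lower n p hp') hl
    calc _ = ((n : ℝ) / p - 1) * Real.log p := by ring
      _ ≤ _ := this
  have h2 : Real.log (n.factorial : ℝ) ≤ n * Real.log n := by
    rw [← Real.log_pow]
    apply Real.log_le_log (by exact_mod_cast Nat.factorial_pos n)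
    exact_mod_cast Nat.factorial_le_pow n
  have h3 := Chebyshev.theta_le_log4_mul_x hn'.le
  have : n * hrA n ≤ n * (Real.log n + Real.log 4) := by linarith
  exact le_of_mul_le_mul_left this hn'

lemma hr_tail : ∃ C : ℝ, ∀ n : ℕ,
    ∑ p ∈ Nat.primesLE n, (Real.log p / ((p : ℝ) - 1) - Real.log p / p) ≤ C := by
  have hs : Summable (fun k : ℕ => 4 * (1 / (k : ℝ) ^ (3 / 2 : ℝ))) :=
    (Real.summable_one_div_nat_rpow.2 (by norm_num)).mul_left 4
  refine ⟨∑' k : ℕ, 4 * (1 / (k : ℝ) ^ (3 / 2 : ℝ)), fun n => ?_⟩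
  refine le_trans ?_ (hs.sum_le_tsum (Nat.primesLE n) (fun i _ => by positivity))
  refine Finset.sum_le_sum fun p hp => ?_
  have h2 : (2 : ℝ) ≤ p := by exact_mod_cast (Nat.prime_of_mem_primesLE hp).two_le
  have hl : Real.log p ≤ 2 * (p : ℝ) ^ (1 / 2 : ℝ) := by
    have := Real.log_le_rpow_div (x := (p : ℝ)) (by positivity) (ε := 1 / 2) (by norm_num)
    linarith
  have h3 : (p : ℝ) ^ (3 / 2 : ℝ) * (p : ℝ) ^ (1 / 2 : ℝ) = p ^ 2 := by
    rw [← Real.rpow_add (by linarith), ← Real.rpow_natCast]; norm_num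
  have h4 : 0 < (p : ℝ) ^ (1 / 2 : ℝ) := by positivity
  have h5 : 0 < (p : ℝ) ^ (3 / 2 : ℝ) := by positivity
  have e : Real.log p / ((p : ℝ) - 1) - Real.log p / p = Real.log p / (p * (p - 1)) := by
    have : (p : ℝ) - 1 ≠ 0 := by linarith
    have : (p : ℝ) ≠ 0 := by linarith
    field_simp
    ring
  rw [e, ← mul_div_assoc, mul_one, div_le_div_iff₀ (by nlinarith) h5]
  calc Real.log p * (p : ℝ) ^ (3 / 2 : ℝ) ≤ 2 * (p : ℝ) ^ (1 / 2 : ℝ) * (p : ℝ) ^ (3 / 2 : ℝ) := by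
        gcongr
    _ = 2 * p ^ 2 := by rw [← h3]; ring
    _ ≤ 4 * (p * (p - 1)) := by nlinarith

lemma hrA_lower : ∃ C : ℝ, ∀ n : ℕ, 1 ≤ n → Real.log n - C ≤ hrA n := by
  obtain ⟨C, hC⟩ := hr_tail
  refine ⟨C + 1, fun n hn => ?_⟩
  have hn' : (0 : ℝ) < n := by exact_mod_cast hn
  have h1 : Real.log (n.factorial : ℝ) ≤ n * ∑ p ∈ Nat.primesLE n, Real.log p / ((p : ℝ) - 1) := by
    rw [hr_log_factorial, Finset.mul_sum]
    refine Finset.sum_le_sum fun p hp => ?_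
    have hp' := Nat.prime_of_mem_primesLE hp
    have := mul_le_mul_of_nonneg_right (hr_val_upper n p hp') (Real.log_natCast_nonneg p)
    calc _ ≤ _ := this
      _ = _ := by ring
  have h2 : n * Real.log n - n ≤ Real.log (n.factorial : ℝ) := by
    have := Real.pow_div_factorial_le_exp (n : ℝ) hn'.le n
    have h := Real.log_le_log (by positivity) this
    rw [Real.log_exp, Real.log_div (by positivity) (by positivity), Real.log_pow] at h
    linarith
  have h3 := hC n
  rw [Finset.sum_sub_distrib] at h3
  change _ - hrA n ≤ C at h3
  have : n * (Real.log n - 1) ≤ n * ∑ p ∈ Nat.primesLE n, Real.log p / ((p : ℝ) - 1) := by linarith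
  have := le_of_mul_le_mul_left this hn'
  linarith

lemma hr_step (n : ℕ) : hrS (n + 1) - hrS n = (hrA (n + 1) - hrA n) / Real.log ((n + 1 : ℕ) : ℝ) := by
  unfold hrS hrA
  simp only [Nat.primesLE_eq_filter_range, Finset.sum_filter]
  rw [Finset.sum_range_succ _ (n + 1), Finset.sum_range_succ _ (n + 1)]
  simp only [add_sub_cancel_left]
  split_ifs with h
  · have : Real.log ((n + 1 : ℕ) : ℝ) ≠ 0 := by
      have := Real.log_pos (x := ((n + 1 : ℕ) : ℝ)) (by exact_mod_cast h.one_lt)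
      exact this.ne'
    field_simp
  · simp

lemma hr_mertens : ∃ C : ℝ, ∀ n : ℕ, 2 ≤ n → |hrS n - Real.log (Real.log n)| ≤ C := by
  obtain ⟨C₁, hC₁⟩ := hrA_lower
  set C := |C₁| + Real.log 4 with hCdef
  have hl4 : 0 < Real.log 4 := Real.log_pos (by norm_num)
  have hl2 : 0 < Real.log 2 := Real.log_pos (by norm_num)
  have hC0 : 0 ≤ C := by positivity
  have hE : ∀ n : ℕ, 1 ≤ n → |hrA n - Real.log n| ≤ C := by
    intro n hn
    have h1 := hC₁ n hn
    have h2 := hrA_upper n hn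
    have := le_abs_self C₁
    have := abs_nonneg C₁
    rw [abs_le]; constructor <;> linarith
  let F : ℕ → ℝ := fun n => hrS n - Real.log (Real.log n) - (hrA n - Real.log n) / Real.log n
  have key : ∀ n : ℕ, 2 ≤ n → |F n| ≤ |F 2| + (C + 1) / Real.log 2 - (C + 1) / Real.log n := by
    intro n hn
    induction n, hn using Nat.le_induction with
    | base => simp
    | succ n hn ih =>
      have hn2 : (2 : ℝ) ≤ n := by exact_mod_cast hn
      have ha : 0 < Real.log n := Real.log_pos (by linarith)
      have hab : Real.log n < Real.log ((n + 1 : ℕ) : ℝ) :=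
        Real.log_lt_log (by linarith) (by push_cast; linarith)
      have hd : Real.log ((n + 1 : ℕ) : ℝ) - Real.log n ≤ 1 := by
        rw [← Real.log_div (by positivity) (by positivity)]
        refine (Real.log_le_sub_one_of_pos (by positivity)).trans ?_
        rw [sub_le_iff_le_add, div_le_iff₀ (by linarith)]
        push_cast; linarith
      have hst := hr_step n
      have hEn := hE n (by omega)
      have hFF : F (n + 1) - F n = (hrS (n + 1) - hrS n)
          - (Real.log (Real.log ((n + 1 : ℕ) : ℝ)) - Real.log (Real.log n))
          - (hrA (n + 1) - Real.log ((n + 1 : ℕ) : ℝ)) / Real.log ((n + 1 : ℕ) : ℝ)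
          + (hrA n - Real.log n) / Real.log n := by simp only [F]; ring
      generalize Real.log ((n + 1 : ℕ) : ℝ) = b at *
      generalize Real.log (n : ℝ) = a at *
      have hb : 0 < b := ha.trans hab
      have u1 : Real.log b - Real.log a ≤ b / a - 1 := by
        rw [← Real.log_div hb.ne' ha.ne']
        exact Real.log_le_sub_one_of_pos (by positivity)
      have u2 : 1 - a / b ≤ Real.log b - Real.log a := by
        have := Real.log_le_sub_one_of_pos (x := a / b) (by positivity)
        rw [Real.log_div ha.ne' hb.ne'] at this
        linarith
      set δ := 1 / a - 1 / b with hδ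
      have hδ0 : 0 ≤ δ := sub_nonneg.2 (one_div_le_one_div_of_le ha hab.le)
      have hba : b / a - 1 - (1 - a / b) = (b - a) * δ := by
        rw [hδ]; field_simp
      have hbd : (b - a) * δ ≤ δ := by nlinarith
      have hF2 : F (n + 1) - F n = ((1 - a / b) - (Real.log b - Real.log a))
          + (hrA n - a) * δ := by
        rw [hFF, hst, hδ]; field_simp; ring
      have hEd : |(hrA n - a) * δ| ≤ C * δ := by
        rw [abs_mul, abs_of_nonneg hδ0]
        exact mul_le_mul_of_nonneg_right hEn hδ0
      have hdiff : |F (n + 1) - F n| ≤ (C + 1) * δ := by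
        rw [hF2]
        rw [abs_le] at hEd ⊢
        constructor <;> linarith [hEd.1, hEd.2]
      have htri : |F (n + 1)| ≤ |F n| + |F (n + 1) - F n| := by
        have := abs_add_le (F n) (F (n + 1) - F n)
        simpa using this
      have : (C + 1) * δ = (C + 1) / a - (C + 1) / b := by rw [hδ]; ring
      linarith
  refine ⟨|F 2| + (C + 1) / Real.log 2 + C / Real.log 2, fun n hn => ?_⟩
  have hn2 : (2 : ℝ) ≤ n := by exact_mod_cast hn
  have hln : Real.log 2 ≤ Real.log n := Real.log_le_log (by norm_num) hn2
  have ha : 0 < Real.log n := hl2.trans_le hln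
  have h1 := key n hn
  have h2 : |(hrA n - Real.log n) / Real.log n| ≤ C / Real.log 2 := by
    rw [abs_div, abs_of_pos ha]
    exact div_le_div₀ hC0 (hE n (by omega)) hl2 hln
  have h3 : hrS n - Real.log (Real.log n) = F n + (hrA n - Real.log n) / Real.log n := by
    simp only [F]; ring
  rw [h3]
  have h4 := abs_add_le (F n) ((hrA n - Real.log n) / Real.log n)
  have h5 : 0 ≤ (C + 1) / Real.log n := by positivity
  linarith

lemma hr_count (n d : ℕ) : (∑ m ∈ Finset.Icc 1 n, if d ∣ m then (1 : ℝ) else 0) = (n / d : ℕ) := by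
  rw [← Nat.Ioc_filter_dvd_card_eq_div n d, Finset.sum_boole]
  congr 2

lemma hr_omega (n m : ℕ) (hm : m ∈ Finset.Icc 1 n) : (m.primeFactors.card : ℝ) =
    ∑ p ∈ Nat.primesLE n, if p ∣ m then (1 : ℝ) else 0 := by
  rw [Finset.sum_boole]
  congr 2
  rw [Finset.mem_Icc] at hm
  ext p
  simp only [Nat.mem_primeFactors, Finset.mem_filter, Nat.mem_primesLE]
  constructor
  · rintro ⟨hp, hd, _⟩
    exact ⟨⟨(Nat.le_of_dvd (by omega) hd).trans hm.2, hp⟩, hd⟩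
  · rintro ⟨⟨_, hp⟩, hd⟩
    exact ⟨hp, hd, by omega⟩

lemma hr_first (n : ℕ) :
    n * hrS n - n ≤ ∑ m ∈ Finset.Icc 1 n, (m.primeFactors.card : ℝ) := by
  rw [Finset.sum_congr rfl (hr_omega n), Finset.sum_comm]
  simp only [hr_count]
  have hc : ((Nat.primesLE n).card : ℝ) ≤ n := by
    rw [Nat.primesLE_eq_filter_Icc_one]
    exact_mod_cast (Finset.card_filter_le _ _).trans (by simp)
  have : n * hrS n - (Nat.primesLE n).card ≤ ∑ p ∈ Nat.primesLE n, ((n / p : ℕ) : ℝ) := by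
    rw [hrS, Finset.mul_sum, Finset.cast_card, ← Finset.sum_sub_distrib]
    refine Finset.sum_le_sum fun p hp => ?_
    have hp := Nat.prime_of_mem_primesLE hp
    have h2 : (n : ℝ) / p < (n / p : ℕ) + 1 := by
      rw [div_lt_iff₀ (by exact_mod_cast hp.pos)]
      exact_mod_cast Nat.lt_mul_of_div_lt (Nat.lt_succ_self _) hp.pos
    rw [mul_one_div]
    linarith
  linarith

lemma hr_second (n : ℕ) :
    ∑ m ∈ Finset.Icc 1 n, (m.primeFactors.card : ℝ) ^ 2 ≤ n * hrS n ^ 2 + n * hrS n := by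
  have e : ∀ m ∈ Finset.Icc 1 n, (m.primeFactors.card : ℝ) ^ 2 =
      ∑ p ∈ Nat.primesLE n, ∑ q ∈ Nat.primesLE n,
        (if p ∣ m then (1 : ℝ) else 0) * (if q ∣ m then (1 : ℝ) else 0) := by
    intro m hm
    rw [hr_omega n m hm, sq, Finset.sum_mul_sum]
  rw [Finset.sum_congr rfl e, Finset.sum_comm]
  have r : n * hrS n ^ 2 + n * hrS n = ∑ p ∈ Nat.primesLE n, ∑ q ∈ Nat.primesLE n,
      ((n : ℝ) * ((1 / p) * (1 / q)) + if p = q then (n : ℝ) * (1 / p) else 0) := by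
    simp only [Finset.sum_add_distrib, Finset.sum_ite_eq, ← Finset.mul_sum, ← Finset.sum_mul]
    rw [Finset.sum_congr rfl (fun p hp => if_pos hp), ← Finset.mul_sum]
    rw [hrS]; ring
  rw [r]
  refine Finset.sum_le_sum fun p hp => ?_
  rw [Finset.sum_comm]
  refine Finset.sum_le_sum fun q hq => ?_
  have hp := Nat.prime_of_mem_primesLE hp
  have hq := Nat.prime_of_mem_primesLE hq
  by_cases hpq : p = q
  · subst hpq
    have : ∀ m : ℕ, (if p ∣ m then (1 : ℝ) else 0) * (if p ∣ m then (1 : ℝ) else 0)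
        = if p ∣ m then (1 : ℝ) else 0 := by intro m; split_ifs <;> simp
    simp only [this, hr_count, if_true]
    have h1 : ((n / p : ℕ) : ℝ) ≤ n / p := Nat.cast_div_le
    have h2 : (0 : ℝ) ≤ (n : ℝ) * ((1 / p) * (1 / p)) := by positivity
    have h3 : (n : ℝ) * (1 / p) = n / p := mul_one_div _ _
    linarith
  · have : ∀ m : ℕ, (if p ∣ m then (1 : ℝ) else 0) * (if q ∣ m then (1 : ℝ) else 0)
        = if p * q ∣ m then (1 : ℝ) else 0 := by
      intro m
      have hc := (Nat.coprime_primes hp hq).2 hpq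
      have : p * q ∣ m ↔ p ∣ m ∧ q ∣ m :=
        ⟨fun h => ⟨(dvd_mul_right _ _).trans h, (dvd_mul_left _ _).trans h⟩,
          fun h => hc.mul_dvd_of_dvd_of_dvd h.1 h.2⟩
      by_cases h1 : p ∣ m <;> by_cases h2 : q ∣ m <;> simp [this, h1, h2]
    simp only [this, hr_count, if_neg hpq, add_zero]
    have h1 : ((n / (p * q) : ℕ) : ℝ) ≤ n / (p * q : ℕ) := Nat.cast_div_le
    refine h1.trans (le_of_eq ?_)
    push_cast
    rw [div_eq_mul_one_div]; congr 1
    rw [one_div_mul_one_div]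

lemma hr_turan (n : ℕ) :
    ∑ m ∈ Finset.Icc 1 n, ((m.primeFactors.card : ℝ) - hrS n) ^ 2 ≤ 3 * n * hrS n := by
  have h1 := hr_first n
  have h2 := hr_second n
  have h0 : 0 ≤ hrS n := Finset.sum_nonneg fun p _ => by positivity
  have e : ∑ m ∈ Finset.Icc 1 n, ((m.primeFactors.card : ℝ) - hrS n) ^ 2 =
      ∑ m ∈ Finset.Icc 1 n, (m.primeFactors.card : ℝ) ^ 2
        - 2 * hrS n * ∑ m ∈ Finset.Icc 1 n, (m.primeFactors.card : ℝ) + n * hrS n ^ 2 := by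
    rw [Finset.mul_sum, ← Finset.sum_sub_distrib]
    have : (n : ℝ) * hrS n ^ 2 = ∑ m ∈ Finset.Icc 1 n, hrS n ^ 2 := by simp
    rw [this, ← Finset.sum_add_distrib]
    refine Finset.sum_congr rfl fun m _ => by ring
  rw [e]
  nlinarith [mul_le_mul_of_nonneg_left h1 h0]

/-- Hardy–Ramanujan theorem: for every ε > 0, the proportion of `m ≤ n` with
`|ω(m) - ln ln n| ≤ (ln ln n)^{1/2 + ε}` tends to 1. -/
theorem hardy_ramanujan (ε : ℝ) (hε : 0 < ε) :
    Tendsto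
      (fun n : ℕ =>
        (((Finset.Icc 1 n).filter (fun m =>
            |(m.primeFactors.card : ℝ) - Real.log (Real.log n)| ≤
              Real.log (Real.log n) ^ ((1 : ℝ) / 2 + ε))).card : ℝ) / n)
      atTop (nhds 1) := by
  obtain ⟨C, hC⟩ := hr_mertens
  have hL : Tendsto (fun n : ℕ => Real.log (Real.log n)) atTop atTop :=
    Real.tendsto_log_atTop.comp (Real.tendsto_log_atTop.comp tendsto_natCast_atTop_atTop)
  have hpow : Tendsto (fun n : ℕ => Real.log (Real.log n) ^ ((1 : ℝ) / 2 + ε)) atTop atTop :=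
    (tendsto_rpow_atTop (by linarith)).comp hL
  have hlow : Tendsto (fun n : ℕ => 1 - 24 * Real.log (Real.log n) ^ (-(2 * ε))) atTop (nhds 1) := by
    have := (tendsto_rpow_neg_atTop (y := 2 * ε) (by linarith)).comp hL
    simpa using (this.const_mul 24).const_sub 1
  refine tendsto_of_tendsto_of_tendsto_of_le_of_le' hlow tendsto_const_nhds ?_ ?_
  · filter_upwards [hL.eventually_ge_atTop (max C 1), hpow.eventually_ge_atTop (2 * C),
      eventually_ge_atTop 2] with n h1 h2 hn
    have hM := hC n hn
    have hT := hr_turan n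
    have hn' : (0 : ℝ) < n := by exact_mod_cast (by omega : 0 < n)
    set L := Real.log (Real.log n) with hLdef
    have hL1 : 1 ≤ L := (le_max_right _ _).trans h1
    have hLC : C ≤ L := (le_max_left _ _).trans h1
    set R := L ^ ((1 : ℝ) / 2 + ε) with hR
    have hR0 : 0 < R := by positivity
    have hR2 : R ^ 2 = L * L ^ (2 * ε) := by
      rw [hR, ← Real.rpow_natCast, ← Real.rpow_mul (by linarith)]
      nth_rw 2 [← Real.rpow_one L]
      rw [← Real.rpow_add (by linarith)]
      congr 1; push_cast; ring
    set G := (Finset.Icc 1 n).filter (fun m => |(m.primeFactors.card : ℝ) - L| ≤ R) with hG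
    set B := (Finset.Icc 1 n).filter (fun m => ¬ |(m.primeFactors.card : ℝ) - L| ≤ R) with hB
    have hGB : (G.card : ℝ) + B.card = n := by
      have := Finset.card_filter_add_card_filter_not (s := Finset.Icc 1 n)
        (fun m => |(m.primeFactors.card : ℝ) - L| ≤ R)
      rw [Nat.card_Icc] at this
      simp only [hG, hB]
      exact_mod_cast this
    have hb : (B.card : ℝ) * (R / 2) ^ 2 ≤ 3 * n * hrS n := by
      refine le_trans ?_ hT
      rw [← nsmul_eq_mul]
      refine (Finset.card_nsmul_le_sum B
        (fun m => ((m.primeFactors.card : ℝ) - hrS n) ^ 2) _ ?_).trans ?_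
      · intro m hm
        have hm := (Finset.mem_filter.1 hm).2
        push Not at hm
        have : R / 2 ≤ |(m.primeFactors.card : ℝ) - hrS n| := by
          have := abs_add_le ((m.primeFactors.card : ℝ) - hrS n) (hrS n - L)
          rw [sub_add_sub_cancel] at this
          linarith
        rw [← sq_abs ((m.primeFactors.card : ℝ) - hrS n)]
        gcongr
      · exact Finset.sum_le_sum_of_subset_of_nonneg (Finset.filter_subset _ _)
          (fun _ _ _ => sq_nonneg _)
    have hS : hrS n ≤ 2 * L := by linarith [(abs_le.1 hM).2]
    have hb2 : (B.card : ℝ) ≤ n * (24 * L ^ (-(2 * ε))) := by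
      have hp : 0 < L ^ (2 * ε) := by positivity
      rw [Real.rpow_neg (by linarith), ← div_eq_mul_inv, ← mul_div_assoc, le_div_iff₀ hp]
      have h5 : (B.card : ℝ) * (R / 2) ^ 2 ≤ 3 * n * (2 * L) := hb.trans (by gcongr)
      have h6 : L * ((B.card : ℝ) * L ^ (2 * ε)) ≤ L * (n * 24) := by
        rw [div_pow, hR2] at h5
        linarith
      exact le_of_mul_le_mul_left h6 (by linarith)
    rw [le_div_iff₀ hn']
    linarith
  · filter_upwards with n
    refine div_le_one_of_le₀ ?_ (by positivity)
    exact_mod_cast (Finset.card_filter_le _ _).trans (by simp)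
end
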